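/- For every positive integer b, Σ_{i=1}^{⌊g_b^{−1}(0)⌋} ⌊g_b(i)⌋ = Σ_{a=1}^{⌊g_b(1)⌋} ⌊g_b^{−1}(a)⌋. -/

import Mathlib

open Finset

/-- `G_b(t) := −t/2 + √(bt − t²/4)`. -/
noncomputable def Gf (b : ℕ) (t : ℝ) : ℝ := -t / 2 + Real.sqrt (b * t - t ^ 2 / 4)

/-- `g_b(t) := G_b(t) − G_b(t−1)`. -/
noncomputable def gf (b : ℕ) (t : ℝ) : ℝ := Gf b t - Gf b (t - 1)

/-- `Q(x,Δ,s,δ,i) := x² + (Δ + 2s + δ + i)x + (1+Δ)(s+i)`. -/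
noncomputable def Qf (x Δ s δ i : ℝ) : ℝ := x ^ 2 + (Δ + 2 * s + δ + i) * x + (1 + Δ) * (s + i)

/-- The explicit formula for the inverse of (the restriction of) `g_b`. -/
noncomputable def ginv (b : ℕ) (x : ℝ) : ℝ :=
  2 * b * (1 + 1 / (4 * b) -
    Real.sqrt ((2 * x + 1) ^ 2 / ((2 * x + 1) ^ 2 + 1)) *
      Real.sqrt (1 - ((2 * x + 1) ^ 2 + 1) / (16 * b ^ 2)))

open Classical in
/-- `τ_b(i) = 1` iff `i > 1` and `g_b(i) − ⌊g_b(i)⌋ ≥ 1/2 + (16b/(i−1) − 4)^{−1/2}`. -/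
noncomputable def taub (b : ℕ) (i : ℕ) : ℕ :=
  if 1 < i ∧ (1 : ℝ) / 2 + 1 / Real.sqrt (16 * b / ((i : ℝ) - 1) - 4) ≤
      gf b i - ⌊gf b i⌋ then 1 else 0

/-- `p_b(i) := (Σ_{j=1}^{i} τ_b(j)) mod 2`. -/
noncomputable def pb (b : ℕ) (i : ℕ) : ℕ := (∑ j ∈ Finset.Icc 1 i, taub b j) % 2

/-- `s_b(i) := Σ_{j=1}^{i} ⌊g_b(j)⌋ + Σ_{j=1}^{i} τ_b(j)·p_b(j−1)`. -/
noncomputable def sb (b : ℕ) (i : ℕ) : ℤ :=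
  (∑ j ∈ Finset.Icc 1 i, ⌊gf b j⌋) + ∑ j ∈ Finset.Icc 1 i, (taub b j : ℤ) * (pb b (j - 1) : ℤ)

/-- `φ_{b,a} := 1/2 + (16b/g_b^{−1}(a + 0.5) − 4)^{−1/2}`. -/
noncomputable def phib (b : ℕ) (a : ℕ) : ℝ :=
  1 / 2 + 1 / Real.sqrt (16 * b / ginv b ((a : ℝ) + 0.5) - 4)

/-- The constant `C_b`. -/
noncomputable def Cb (b : ℕ) : ℝ :=
  1 - (1 + (⌊gf b 1⌋ : ℝ)) / (2 * b) +
    ∑ a ∈ Finset.range (⌊gf b 1⌋.toNat),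
      (2 - Real.sqrt ((2 * ((a : ℝ) + phib b a) + 1) ^ 2 / ((2 * ((a : ℝ) + phib b a) + 1) ^ 2 + 1))
         - Real.sqrt ((2 * (a : ℝ) + 3) ^ 2 / ((2 * (a : ℝ) + 3) ^ 2 + 1)))

/-! Both sides count the lattice points `(i, a)` with `i, a ≥ 1` under the curve `a = g_b(i)`, by
columns on the left and by rows on the right, so it suffices that `a ≤ g_b(t) ↔ t ≤ g_b⁻¹(a)`.
With `y = 2a + 1` and `c = 2b + 1/2 - t`, two squarings turn `a ≤ g_b(t)`, an inequality between
two square roots, into `y² ≤ 2c` together with `y² (16b² - (y² + 1)) ≤ 4c² (y² + 1)`. For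
`c ≥ 0` the latter inequality is `t ≤ g_b⁻¹(a)`, and it implies the former as soon as
`y² + 1 ≤ 4b`, that is, as soon as `a ≤ g_b(1)`. -/

lemma card_filter_le_Icc_one {k n : ℕ} (h : k ≤ n) : #{a ∈ Icc 1 n | a ≤ k} = k := by
  have : {a ∈ Icc 1 n | a ≤ k} = Icc 1 k := by
    ext a
    simp only [mem_filter, mem_Icc]
    omega
  rw [this, Nat.card_Icc, Nat.add_sub_cancel]

lemma sum_Icc_one_eq_of_le_iff_le {f g : ℕ → ℕ} {m n : ℕ}
    (hf : ∀ i ∈ Icc 1 m, f i ≤ n) (hg : ∀ a ∈ Icc 1 n, g a ≤ m)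
    (hfg : ∀ i ∈ Icc 1 m, ∀ a ∈ Icc 1 n, (a ≤ f i ↔ i ≤ g a)) :
    ∑ i ∈ Icc 1 m, f i = ∑ a ∈ Icc 1 n, g a := by
  calc ∑ i ∈ Icc 1 m, f i
      = ∑ i ∈ Icc 1 m, #{a ∈ Icc 1 n | a ≤ f i} :=
        sum_congr rfl fun i hi => (card_filter_le_Icc_one (hf i hi)).symm
    _ = ∑ a ∈ Icc 1 n, #{i ∈ Icc 1 m | a ≤ f i} :=
        sum_card_bipartiteAbove_eq_sum_card_bipartiteBelow fun i a => a ≤ f i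
    _ = ∑ a ∈ Icc 1 n, #{i ∈ Icc 1 m | i ≤ g a} :=
        sum_congr rfl fun a ha => congrArg card (filter_congr fun i hi => hfg i hi a ha)
    _ = ∑ a ∈ Icc 1 n, g a :=
        sum_congr rfl fun a ha => card_filter_le_Icc_one (hg a ha)

section Floor

variable {R : Type*} [Ring R] [LinearOrder R] [IsStrictOrderedRing R] [FloorRing R]

lemma natCast_mem_Icc_of_mem_Icc_floor {X : R} {n : ℕ} (hn : n ∈ Icc 1 ⌊X⌋₊) :
    (n : R) ∈ Set.Icc 1 X := by
  obtain ⟨hn₁, hnX⟩ := mem_Icc.1 hn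
  exact ⟨Nat.one_le_cast.2 hn₁, (Nat.le_floor_iff' (by omega)).1 hnX⟩

lemma sum_floor_eq_sum_floor_of_le_iff_le {f g : R → R} {X Y : R}
    (hf : Set.MapsTo f (Set.Icc 1 X) (Set.Icc 0 Y))
    (hg : Set.MapsTo g (Set.Icc 1 Y) (Set.Icc 0 X))
    (hfg : ∀ t ∈ Set.Icc 1 X, ∀ a ∈ Set.Icc 1 Y, (a ≤ f t ↔ t ≤ g a)) :
    ∑ i ∈ Icc 1 ⌊X⌋.toNat, ⌊f i⌋ = ∑ a ∈ Icc 1 ⌊Y⌋.toNat, ⌊g a⌋ := by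
  simp only [Int.floor_toNat]
  have hX {i : ℕ} (hi : i ∈ Icc 1 ⌊X⌋₊) := natCast_mem_Icc_of_mem_Icc_floor hi
  have hY {a : ℕ} (ha : a ∈ Icc 1 ⌊Y⌋₊) := natCast_mem_Icc_of_mem_Icc_floor ha
  have natFloor_sum : ∑ i ∈ Icc 1 ⌊X⌋₊, ⌊f i⌋₊ = ∑ a ∈ Icc 1 ⌊Y⌋₊, ⌊g a⌋₊ := by
    refine sum_Icc_one_eq_of_le_iff_le (fun i hi => Nat.floor_le_floor (hf (hX hi)).2)
      (fun a ha => Nat.floor_le_floor (hg (hY ha)).2) fun i hi a ha => ?_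
    have hi₀ : i ≠ 0 := Nat.one_le_iff_ne_zero.1 (mem_Icc.1 hi).1
    have ha₀ : a ≠ 0 := Nat.one_le_iff_ne_zero.1 (mem_Icc.1 ha).1
    rw [Nat.le_floor_iff' ha₀, Nat.le_floor_iff' hi₀]
    exact hfg i (hX hi) a (hY ha)
  calc ∑ i ∈ Icc 1 ⌊X⌋₊, ⌊f i⌋
      = ∑ i ∈ Icc 1 ⌊X⌋₊, (⌊f i⌋₊ : ℤ) :=
        sum_congr rfl fun i hi => (Int.natCast_floor_eq_floor (hf (hX hi)).1).symm
    _ = ∑ a ∈ Icc 1 ⌊Y⌋₊, (⌊g a⌋₊ : ℤ) := mod_cast natFloor_sum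
    _ = ∑ a ∈ Icc 1 ⌊Y⌋₊, ⌊g a⌋ :=
        sum_congr rfl fun a ha => Int.natCast_floor_eq_floor (hg (hY ha)).1

end Floor

lemma sqrt_add_le_sqrt_add_sqrt (x y : ℝ) : √(x + y) ≤ √x + √y := by
  have le_sqrt_sq (z : ℝ) : z ≤ √z ^ 2 := (Real.sqrt_le_iff.1 le_rfl).2
  have cross_term_nonneg : 0 ≤ √x * √y := by positivity
  exact Real.sqrt_le_iff.2 ⟨by positivity, by linarith [le_sqrt_sq x, le_sqrt_sq y]⟩

lemma sq_le_two_mul_of_mul_le_mul {y c β : ℝ} (hc : 0 ≤ c) (hy : y ^ 2 + 1 ≤ 4 * β)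
    (h : y ^ 2 * (16 * β ^ 2 - (y ^ 2 + 1)) ≤ 4 * c ^ 2 * (y ^ 2 + 1)) : y ^ 2 ≤ 2 * c := by
  have sq_sq_le : (y ^ 2) ^ 2 ≤ (2 * c) ^ 2 := by
    refine le_of_mul_le_mul_right ?_ (by positivity : 0 < y ^ 2 + 1)
    calc (y ^ 2) ^ 2 * (y ^ 2 + 1) = y ^ 2 * ((y ^ 2 + 1) ^ 2 - (y ^ 2 + 1)) := by ring
      _ ≤ y ^ 2 * ((4 * β) ^ 2 - (y ^ 2 + 1)) := by gcongr
      _ = y ^ 2 * (16 * β ^ 2 - (y ^ 2 + 1)) := by ring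
      _ ≤ 4 * c ^ 2 * (y ^ 2 + 1) := h
      _ = (2 * c) ^ 2 * (y ^ 2 + 1) := by ring
  exact le_of_sq_le_sq sq_sq_le (by positivity)

section

variable {b : ℕ} {a t : ℝ}

lemma gf_eq_sqrt_sub_sqrt (b : ℕ) (t : ℝ) :
    gf b t = √(b * t - t ^ 2 / 4) - √(b * (t - 1) - (t - 1) ^ 2 / 4) - 1 / 2 := by
  unfold gf Gf
  ring

lemma gf_one (b : ℕ) : gf b 1 = √(b - 1 / 4) - 1 / 2 := by
  norm_num [gf_eq_sqrt_sub_sqrt]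

lemma gf_le_gf_one (ht : 1 ≤ t) : gf b t ≤ gf b 1 := by
  have sqrt_le : √(b * t - t ^ 2 / 4) ≤ √(b * (t - 1) - (t - 1) ^ 2 / 4) + √(b - 1 / 4) :=
    (Real.sqrt_le_sqrt (by linarith)).trans (sqrt_add_le_sqrt_add_sqrt _ _)
  rw [gf_one, gf_eq_sqrt_sub_sqrt]
  linarith

lemma le_gf_one_iff (ha : 0 ≤ a) : a ≤ gf b 1 ↔ (2 * a + 1) ^ 2 + 1 ≤ 4 * b := by
  rw [gf_one, le_sub_iff_add_le, Real.le_sqrt' (by positivity)]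
  constructor <;> intro h <;> linarith

lemma gf_one_nonneg (hb : 0 < b) : 0 ≤ gf b 1 := by
  have : (1 : ℝ) ≤ b := mod_cast hb
  exact (le_gf_one_iff le_rfl).2 (by linarith)

lemma le_gf_iff_mul_sqrt_le (ha : 0 ≤ a) (ht : t ∈ Set.Icc 1 (4 * b : ℝ)) :
    a ≤ gf b t ↔ 4 * (2 * a + 1) * √(b * (t - 1) - (t - 1) ^ 2 / 4) ≤
      2 * (2 * b + 1 / 2 - t) - (2 * a + 1) ^ 2 := by
  obtain ⟨ht₁, htb⟩ := ht
  have radicand_nonneg : 0 ≤ b * (t - 1) - (t - 1) ^ 2 / 4 := by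
    have : 0 ≤ (t - 1) * (4 * b - (t - 1)) := mul_nonneg (by linarith) (by linarith)
    linarith
  set q := √(b * (t - 1) - (t - 1) ^ 2 / 4) with hq
  have q_sq : q ^ 2 = b * (t - 1) - (t - 1) ^ 2 / 4 := Real.sq_sqrt radicand_nonneg
  calc a ≤ gf b t ↔ a + 1 / 2 + q ≤ √(b * t - t ^ 2 / 4) := by
        rw [gf_eq_sqrt_sub_sqrt, ← hq]
        constructor <;> intro h <;> linarith
    _ ↔ (a + 1 / 2 + q) ^ 2 ≤ b * t - t ^ 2 / 4 := Real.le_sqrt' (by positivity)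
    _ ↔ _ := by constructor <;> intro h <;> linarith

lemma le_gf_iff (ha : 0 ≤ a) (ht : t ∈ Set.Icc 1 (4 * b : ℝ)) :
    a ≤ gf b t ↔ (2 * a + 1) ^ 2 ≤ 2 * (2 * b + 1 / 2 - t) ∧
      (2 * a + 1) ^ 2 * (16 * b ^ 2 - ((2 * a + 1) ^ 2 + 1)) ≤
        4 * (2 * b + 1 / 2 - t) ^ 2 * ((2 * a + 1) ^ 2 + 1) := by
  have mul_sqrt_eq : 4 * (2 * a + 1) * √(b * (t - 1) - (t - 1) ^ 2 / 4) =
      √((4 * (2 * a + 1)) ^ 2 * (b * (t - 1) - (t - 1) ^ 2 / 4)) := by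
    rw [Real.sqrt_mul (sq_nonneg _), Real.sqrt_sq (by positivity)]
  rw [le_gf_iff_mul_sqrt_le ha ht, mul_sqrt_eq, Real.sqrt_le_iff, sub_nonneg]
  refine and_congr_right fun _ => ?_
  constructor <;> intro h <;> linarith

lemma ginv_eq_sub_sqrt (hb : 0 < b) (a : ℝ) :
    ginv b a = 2 * b + 1 / 2 -
      √((2 * a + 1) ^ 2 * (16 * b ^ 2 - ((2 * a + 1) ^ 2 + 1)) / (4 * ((2 * a + 1) ^ 2 + 1))) := by
  have two_b_eq : (2 * b : ℝ) = √((2 * b) ^ 2) := (Real.sqrt_sq (by positivity)).symm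
  have radicand_eq :
      (2 * a + 1) ^ 2 * (16 * b ^ 2 - ((2 * a + 1) ^ 2 + 1)) / (4 * ((2 * a + 1) ^ 2 + 1)) =
        (2 * b) ^ 2 * ((2 * a + 1) ^ 2 / ((2 * a + 1) ^ 2 + 1) *
          (1 - ((2 * a + 1) ^ 2 + 1) / (16 * b ^ 2))) := by
    field_simp
    ring
  rw [radicand_eq, Real.sqrt_mul (by positivity), Real.sqrt_mul (by positivity), ← two_b_eq, ginv]
  field_simp
  ring

lemma ginv_le (hb : 0 < b) (a : ℝ) : ginv b a ≤ 2 * b + 1 / 2 := by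
  rw [ginv_eq_sub_sqrt hb]
  exact sub_le_self _ (Real.sqrt_nonneg _)

lemma le_ginv_iff (hb : 0 < b) :
    t ≤ ginv b a ↔ 0 ≤ 2 * b + 1 / 2 - t ∧
      (2 * a + 1) ^ 2 * (16 * b ^ 2 - ((2 * a + 1) ^ 2 + 1)) ≤
        4 * (2 * b + 1 / 2 - t) ^ 2 * ((2 * a + 1) ^ 2 + 1) := by
  rw [ginv_eq_sub_sqrt hb, le_sub_comm, Real.sqrt_le_iff, div_le_iff₀ (by positivity)]
  ring_nf

lemma le_gf_iff_le_ginv (hb : 0 < b) (ha : a ∈ Set.Icc 0 (gf b 1))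
    (ht : t ∈ Set.Icc 1 (4 * b : ℝ)) : a ≤ gf b t ↔ t ≤ ginv b a := by
  rw [le_gf_iff ha.1 ht, le_ginv_iff hb]
  refine and_congr_left fun h => ⟨fun hy => ?_, fun hc => ?_⟩
  · linarith [sq_nonneg (2 * a + 1)]
  · exact sq_le_two_mul_of_mul_le_mul hc ((le_gf_one_iff ha.1).1 ha.2) h

lemma mem_Icc_of_le_ginv (hb : 0 < b) (ht : 1 ≤ t) (hta : t ≤ ginv b a) :
    t ∈ Set.Icc 1 (4 * b : ℝ) := by
  have : (1 : ℝ) ≤ b := mod_cast hb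
  exact ⟨ht, by linarith [ginv_le hb a]⟩

lemma mapsTo_gf (hb : 0 < b) :
    Set.MapsTo (gf b) (Set.Icc 1 (ginv b 0)) (Set.Icc 0 (gf b 1)) := by
  rintro t ⟨ht₁, ht⟩
  have zero_mem : (0 : ℝ) ∈ Set.Icc 0 (gf b 1) := Set.left_mem_Icc.2 (gf_one_nonneg hb)
  exact ⟨(le_gf_iff_le_ginv hb zero_mem (mem_Icc_of_le_ginv hb ht₁ ht)).2 ht, gf_le_gf_one ht₁⟩

lemma mapsTo_ginv (hb : 0 < b) :
    Set.MapsTo (ginv b) (Set.Icc 0 (gf b 1)) (Set.Icc 1 (ginv b 0)) := by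
  intro a ha
  have hb₁ : (1 : ℝ) ≤ b := mod_cast hb
  have one_le : 1 ≤ ginv b a := (le_gf_iff_le_ginv hb ha ⟨le_rfl, by linarith⟩).1 ha.2
  have ginv_mem : ginv b a ∈ Set.Icc 1 (4 * b : ℝ) := mem_Icc_of_le_ginv hb one_le le_rfl
  have le_gf_ginv : a ≤ gf b (ginv b a) := (le_gf_iff_le_ginv hb ha ginv_mem).2 le_rfl
  have zero_mem : (0 : ℝ) ∈ Set.Icc 0 (gf b 1) := Set.left_mem_Icc.2 (gf_one_nonneg hb)
  exact ⟨one_le, (le_gf_iff_le_ginv hb zero_mem ginv_mem).1 (ha.1.trans le_gf_ginv)⟩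

end

/-- `Σ_{i=1}^{⌊g_b^{−1}(0)⌋} ⌊g_b(i)⌋ = Σ_{a=1}^{⌊g_b(1)⌋} ⌊g_b^{−1}(a)⌋`. -/
theorem sum_floor_gf_eq (b : ℕ) (hb : 0 < b) :
    ∑ i ∈ Finset.Icc 1 (⌊ginv b 0⌋.toNat), ⌊gf b i⌋ =
      ∑ a ∈ Finset.Icc 1 (⌊gf b 1⌋.toNat), ⌊ginv b (a : ℝ)⌋ := by
  have Icc_one_subset (X : ℝ) : Set.Icc 1 X ⊆ Set.Icc 0 X := Set.Icc_subset_Icc_left zero_le_one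
  refine sum_floor_eq_sum_floor_of_le_iff_le (mapsTo_gf hb)
    ((mapsTo_ginv hb).mono (Icc_one_subset _) (Icc_one_subset _)) fun t ht a ha => ?_
  exact le_gf_iff_le_ginv hb (Icc_one_subset _ ha) (mem_Icc_of_le_ginv hb ht.1 ht.2)
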